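/- Let K = σ·I_N + M B Mᵀ with M = Diag(√p)·Φ, where σ ∈ [0,1), B ∈ ℝ^{V×V} is symmetric positive definite, and B⁻¹ − (1−σ)⁻¹·Σ is positive definite (Σ = Φᵀ Diag(p) Φ). Then I_N − K is invertible and the L-ensemble L := K·(I_N − K)⁻¹ equals α·I_N + M A Mᵀ, where α = σ/(1−σ) and A = (1−σ)⁻² · (B⁻¹ − (1−σ)⁻¹·Σ)⁻¹. -/

import Mathlib

open Matrix

/-! Since `1 - K = (1 - σ)•1 - M B Mᵀ` is a low-rank perturbation of a scalar matrix, the Woodbury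
identity inverts it as soon as the capacitance matrix `B⁻¹ - (1 - σ)⁻¹ Mᵀ M` is invertible, and
`K (1 - K)⁻¹ = (1 - K)⁻¹ - 1` turns this inverse into the `L`-ensemble. The weights `√p` enter
only through the Gram matrix `Mᵀ M = Φᵀ Diag(p) Φ`. -/

section CommRing

variable {m n R : Type*} [Fintype m] [DecidableEq m] [Fintype n] [DecidableEq n] [CommRing R]

theorem mul_inv_one_sub_eq_inv_one_sub_sub_one {K : Matrix m m R} (hK : IsUnit (1 - K)) :
    K * (1 - K)⁻¹ = (1 - K)⁻¹ - 1 := by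
  have hdet : IsUnit (1 - K).det := (isUnit_iff_isUnit_det _).1 hK
  calc K * (1 - K)⁻¹ = (1 - (1 - K)) * (1 - K)⁻¹ := by rw [sub_sub_cancel]
    _ = (1 - K)⁻¹ - 1 := by rw [Matrix.sub_mul, Matrix.one_mul, mul_nonsing_inv _ hdet]

theorem isUnit_add_mul_mul {A : Matrix m m R} {U : Matrix m n R} {C : Matrix n n R}
    {V : Matrix n m R} (hA : IsUnit A) (hC : IsUnit C) (hAC : IsUnit (C⁻¹ + V * A⁻¹ * U)) :
    IsUnit (A + U * C * V) := by
  obtain ⟨_⟩ := hA.nonempty_invertible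
  obtain ⟨_⟩ := hC.nonempty_invertible
  simp only [← invOf_eq_nonsing_inv] at hAC
  obtain ⟨_⟩ := hAC.nonempty_invertible
  let := invertibleAddMulMul A U C V
  exact isUnit_of_invertible _

theorem isUnit_sub_mul_mul {A : Matrix m m R} {U : Matrix m n R} {C : Matrix n n R}
    {V : Matrix n m R} (hA : IsUnit A) (hC : IsUnit C) (hAC : IsUnit (C⁻¹ - V * A⁻¹ * U)) :
    IsUnit (A - U * C * V) := by
  have hneg : IsUnit (C⁻¹ + -V * A⁻¹ * U) := by
    simpa only [Matrix.neg_mul, ← sub_eq_add_neg] using hAC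
  simpa only [Matrix.mul_neg, ← sub_eq_add_neg] using isUnit_add_mul_mul hA hC hneg

theorem sub_mul_mul_inv_eq_add {A : Matrix m m R} {U : Matrix m n R} {C : Matrix n n R}
    {V : Matrix n m R} (hA : IsUnit A) (hC : IsUnit C) (hAC : IsUnit (C⁻¹ - V * A⁻¹ * U)) :
    (A - U * C * V)⁻¹ = A⁻¹ + A⁻¹ * U * (C⁻¹ - V * A⁻¹ * U)⁻¹ * V * A⁻¹ := by
  have hneg : IsUnit (C⁻¹ + -V * A⁻¹ * U) := by
    simpa only [Matrix.neg_mul, ← sub_eq_add_neg] using hAC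
  simpa only [Matrix.neg_mul, Matrix.mul_neg, ← sub_eq_add_neg, sub_neg_eq_add] using
    add_mul_mul_inv_eq_sub A U C (-V) hA hC hneg

end CommRing

section Field

variable {m n 𝕜 : Type*} [Fintype m] [DecidableEq m] [Field 𝕜]

theorem isUnit_smul_one {s : 𝕜} (hs : s ≠ 0) : IsUnit (s • (1 : Matrix m m 𝕜)) :=
  isUnit_one.smul (Units.mk0 s hs)

theorem inv_smul_one {s : 𝕜} (hs : s ≠ 0) : (s • (1 : Matrix m m 𝕜))⁻¹ = s⁻¹ • 1 :=
  inv_eq_right_inv <| by rw [smul_mul_smul_comm, mul_inv_cancel₀ hs, one_smul, Matrix.one_mul]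

theorem mul_inv_smul_one_mul {s : 𝕜} (hs : s ≠ 0) (U : Matrix m n 𝕜) (V : Matrix n m 𝕜) :
    V * (s • (1 : Matrix m m 𝕜))⁻¹ * U = s⁻¹ • (V * U) := by
  rw [inv_smul_one hs, Matrix.mul_smul, Matrix.mul_one, Matrix.smul_mul]

variable [Fintype n] [DecidableEq n]

theorem isUnit_smul_one_sub_mul_mul {s : 𝕜} {U : Matrix m n 𝕜} {C : Matrix n n 𝕜}
    {V : Matrix n m 𝕜} (hs : s ≠ 0) (hC : IsUnit C) (hUV : IsUnit (C⁻¹ - s⁻¹ • (V * U))) :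
    IsUnit (s • (1 : Matrix m m 𝕜) - U * C * V) := by
  rw [← mul_inv_smul_one_mul hs] at hUV
  exact isUnit_sub_mul_mul (isUnit_smul_one hs) hC hUV

theorem smul_one_sub_mul_mul_inv_eq_add {s : 𝕜} {U : Matrix m n 𝕜} {C : Matrix n n 𝕜}
    {V : Matrix n m 𝕜} (hs : s ≠ 0) (hC : IsUnit C) (hUV : IsUnit (C⁻¹ - s⁻¹ • (V * U))) :
    (s • (1 : Matrix m m 𝕜) - U * C * V)⁻¹ =
      s⁻¹ • (1 : Matrix m m 𝕜) + U * ((s ^ 2)⁻¹ • (C⁻¹ - s⁻¹ • (V * U))⁻¹) * V := by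
  rw [← mul_inv_smul_one_mul hs] at hUV
  rw [sub_mul_mul_inv_eq_add (isUnit_smul_one hs) hC hUV, mul_inv_smul_one_mul hs,
    inv_smul_one hs]
  simp only [Matrix.smul_mul, Matrix.mul_smul, Matrix.one_mul, Matrix.mul_one, smul_smul,
    sq, mul_inv]

theorem stmt3_general (M : Matrix m n 𝕜) (N : Matrix n m 𝕜) (S : Matrix n n 𝕜) (hS : S = N * M)
    (σ : 𝕜) (hσ : σ ≠ 1) (B : Matrix n n 𝕜) (hB : IsUnit B)
    (hBS : IsUnit (B⁻¹ - (1 - σ)⁻¹ • S))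
    (K : Matrix m m 𝕜) (hK : K = σ • (1 : Matrix m m 𝕜) + M * B * N) :
    IsUnit (1 - K) ∧
      K * (1 - K)⁻¹ =
        (σ / (1 - σ)) • (1 : Matrix m m 𝕜) +
          M * (((1 - σ) ^ 2)⁻¹ • (B⁻¹ - (1 - σ)⁻¹ • S)⁻¹) * N := by
  subst hS
  have hs : 1 - σ ≠ 0 := sub_ne_zero.2 hσ.symm
  have one_sub_K : 1 - K = (1 - σ) • (1 : Matrix m m 𝕜) - M * B * N := by
    rw [hK, sub_smul, one_smul, sub_sub]
  have isUnit_one_sub_K : IsUnit (1 - K) :=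
    one_sub_K ▸ isUnit_smul_one_sub_mul_mul hs hB hBS
  have coeff : (1 - σ)⁻¹ - 1 = σ / (1 - σ) := by field_simp; ring
  refine ⟨isUnit_one_sub_K, ?_⟩
  rw [mul_inv_one_sub_eq_inv_one_sub_sub_one isUnit_one_sub_K, one_sub_K,
    smul_one_sub_mul_mul_inv_eq_add hs hB hBS, add_sub_right_comm, ← coeff, sub_smul, one_smul]

end Field

theorem transpose_mul_self_diagonal_sqrt_mul {m n : Type*} [Fintype m] [DecidableEq m]
    (Φ : Matrix m n ℝ) {p : m → ℝ} (hp : ∀ x, 0 ≤ p x) :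
    (diagonal (fun x => √(p x)) * Φ)ᵀ * (diagonal (fun x => √(p x)) * Φ) =
      Φᵀ * diagonal p * Φ := by
  have sqrt_mul_sqrt :
      diagonal (fun x => √(p x)) * diagonal (fun x => √(p x)) = diagonal p := by
    simp only [diagonal_mul_diagonal, Real.mul_self_sqrt (hp _)]
  rw [transpose_mul, diagonal_transpose, ← sqrt_mul_sqrt]
  simp only [Matrix.mul_assoc]

/-- For `K = σ•I + M B Mᵀ` with `σ ∈ [0,1)`, `B ≻ 0` and
`B⁻¹ - (1-σ)⁻¹ Σ ≻ 0`, the matrix `I - K` is invertible and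
`L = K (I - K)⁻¹ = α•I + M A Mᵀ` with `α = σ/(1-σ)` and
`A = (1-σ)⁻² (B⁻¹ - (1-σ)⁻¹ Σ)⁻¹`. -/
theorem stmt3 {ι : Type*} [Fintype ι] [DecidableEq ι] {V : ℕ}
    (Φ : Matrix ι (Fin V) ℝ) (p : ι → ℝ) (hp : ∀ x, 0 ≤ p x)
    (M : Matrix ι (Fin V) ℝ)
    (hM : M = Matrix.diagonal (fun x => Real.sqrt (p x)) * Φ)
    (S : Matrix (Fin V) (Fin V) ℝ) (hS : S = Φᵀ * Matrix.diagonal p * Φ)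
    (σ : ℝ) (hσ0 : 0 ≤ σ) (hσ1 : σ < 1)
    (B : Matrix (Fin V) (Fin V) ℝ) (hB : B.PosDef)
    (hBS : (B⁻¹ - (1 - σ)⁻¹ • S).PosDef)
    (K : Matrix ι ι ℝ) (hK : K = σ • (1 : Matrix ι ι ℝ) + M * B * Mᵀ) :
    IsUnit ((1 : Matrix ι ι ℝ) - K) ∧
      K * ((1 : Matrix ι ι ℝ) - K)⁻¹ =
        (σ / (1 - σ)) • (1 : Matrix ι ι ℝ) +
          M * (((1 - σ) ^ 2)⁻¹ • (B⁻¹ - (1 - σ)⁻¹ • S)⁻¹) * Mᵀ := by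
  have hSM : S = Mᵀ * M := by rw [hS, hM, transpose_mul_self_diagonal_sqrt_mul Φ hp]
  exact stmt3_general M Mᵀ S hSM σ hσ1.ne B hB.isUnit hBS.isUnit K hK
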